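/- arXiv:2508.04209 — 2 statements merged into one kernel-verified Lean document; each statement's English description precedes it below -/
import Mathlib

section
/- Let k ≥ 1, let t ≥ 2, and let G = (V,E) be a finite simple graph with |V| ≥ k that contains no cycle of length greater than t. Then ∑_{i=1}^{k} λ_i(L(G)) ≤ |E| + ⌊t(2k − 1)/2⌋. -/
open Finset

/-- The `i`-th largest entry (1-indexed, so `i = 1` gives the maximum) of a tuple
`f : Fin n → ℝ`, counted with multiplicity. Junk value `0` outside the range `1 ≤ i ≤ n`. -/
noncomputable def ithLargest {n : ℕ} (f : Fin n → ℝ) (i : ℕ) : ℝ :=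
  if h : 1 ≤ i ∧ i ≤ n then f (Tuple.sort f (Fin.rev ⟨i - 1, by omega⟩)) else 0

/-- The eigenvalues of the Laplacian matrix of a finite simple graph `G`
(as a tuple indexed by the vertices, with multiplicity). -/
noncomputable def lapEigs {n : ℕ} (G : SimpleGraph (Fin n)) [DecidableRel G.Adj] :
    Fin n → ℝ :=
  (SimpleGraph.posSemidef_lapMatrix ℝ G).isHermitian.eigenvalues

/-- The degree sequence of `G`, as a real-valued tuple indexed by the vertices. -/
noncomputable def degTuple {n : ℕ} (G : SimpleGraph (Fin n)) [DecidableRel G.Adj] :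
    Fin n → ℝ :=
  fun v => (G.degree v : ℝ)


theorem cyc_aux {n : ℕ} (G : SimpleGraph (Fin n)) (t : ℕ)
    (hG : ∀ (v : Fin n) (c : G.Walk v v), c.IsCycle → c.length ≤ t)
    (l : List (Fin n)) (hne : l ≠ []) (hch : l.IsChain G.Adj) (hnd : l.Nodup)
    (h3 : 3 ≤ l.length) (hadj : G.Adj (l.getLast hne) (l.head hne)) : l.length ≤ t := by
  have hp : (SimpleGraph.Walk.ofSupport l hne hch).IsPath := by
    rw [SimpleGraph.Walk.isPath_def, SimpleGraph.Walk.support_ofSupport]; exact hnd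
  have hl := SimpleGraph.Walk.length_ofSupport hne hch
  have hc : (SimpleGraph.Walk.cons hadj (SimpleGraph.Walk.ofSupport l hne hch)).IsCycle := by
    rw [SimpleGraph.Walk.cons_isCycle_iff]
    refine ⟨hp, fun hm => ?_⟩
    rw [Sym2.eq_swap] at hm
    have := hp.length_eq_one_of_mem_edges hm
    omega
  have := hG _ _ hc
  rw [SimpleGraph.Walk.length_cons, hl] at this
  omega

def IsP {n : ℕ} (G : SimpleGraph (Fin n)) (U : Finset (Fin n)) (l : List (Fin n)) : Prop :=
  l ≠ [] ∧ l.IsChain G.Adj ∧ l.Nodup ∧ ∀ x ∈ l, x ∈ U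

theorem head_nbrs {n : ℕ} (G : SimpleGraph (Fin n)) (t : ℕ) (ht : 2 ≤ t)
    (hG : ∀ (v : Fin n) (c : G.Walk v v), c.IsCycle → c.length ≤ t) (U : Finset (Fin n))
    (l : List (Fin n)) (hl : IsP G U l) (hmax : ∀ l', IsP G U l' → l'.length ≤ l.length)
    (y : Fin n) (hy : y ∈ U) (hadj : G.Adj (l.head hl.1) y) : y ∈ l.take t := by
  obtain ⟨hne, hch, hnd, hU⟩ := hl
  have hyl : y ∈ l := by
    by_contra hyl
    have := hmax (y :: l) ⟨by simp, ?_, by simp [hyl, hnd], by simpa [hy] using hU⟩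
    · simp at this
    · cases l with
      | nil => simp at hne
      | cons a l => exact List.isChain_cons_cons.2 ⟨hadj.symm, hch⟩
  obtain ⟨j, hj, rfl⟩ := List.getElem_of_mem hyl
  have hjt : j + 1 ≤ t := by
    by_contra hcon
    have hlen : (l.take (j+1)).length = j + 1 := by simp; omega
    have hne' : l.take (j+1) ≠ [] := by intro h; rw [h] at hlen; simp at hlen
    have := cyc_aux G t hG (l.take (j+1)) hne' (hch.take _) (hnd.sublist (List.take_sublist _ _))
      (by omega) ?_
    · omega
    · rw [List.getLast_eq_getElem, List.head_take]
      simp only [hlen, List.getElem_take]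
      simpa using hadj.symm
  rw [List.mem_take_iff_getElem]
  exact ⟨j, by omega, rfl⟩

theorem rot_isP {n : ℕ} (G : SimpleGraph (Fin n)) (U : Finset (Fin n))
    (l : List (Fin n)) (hl : IsP G U l) (i : ℕ) (hi : i + 1 < l.length)
    (hadj : G.Adj (l.head hl.1) l[i+1]) :
    IsP G U ((l.take (i+1)).reverse ++ l.drop (i+1)) := by
  obtain ⟨hne, hch, hnd, hU⟩ := hl
  have hperm : ((l.take (i+1)).reverse ++ l.drop (i+1)).Perm l := by
    conv_rhs => rw [← List.take_append_drop (i+1) l]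
    exact (List.reverse_perm _).append_right _
  refine ⟨?_, ?_, hperm.nodup_iff.2 hnd, fun x hx => hU x (hperm.mem_iff.1 hx)⟩
  · intro h; rw [h] at hperm; exact hne (List.nil_perm.1 hperm)
  · rw [List.isChain_append]
    refine ⟨?_, hch.drop _, ?_⟩
    · rw [List.isChain_reverse]
      exact (hch.take _).imp fun a b h => h.symm
    · intro x hx y hy
      have h1 : l.head? = some (l.head hne) := List.head?_eq_some_head hne
      simp [List.getLast?_reverse, List.head?_take, h1] at hx
      simp [List.head?_drop, hi] at hy
      subst hx hy
      exact hadj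

theorem exists_longest {n : ℕ} (G : SimpleGraph (Fin n)) (U : Finset (Fin n)) (hU : U.Nonempty)
    (d : Fin n → ℕ) : ∃ (l : List (Fin n)) (hl : IsP G U l),
      (∀ l', IsP G U l' → l'.length ≤ l.length) ∧
      (∀ l' (hl' : IsP G U l'), l'.length = l.length → d (l'.head hl'.1) ≤ d (l.head hl.1)) := by
  classical
  obtain ⟨u, hu⟩ := hU
  have h0 : IsP G U [u] := ⟨by simp, by simp, by simp, by simpa using hu⟩
  have hfin : {l | IsP G U l}.Finite := by
    refine (List.finite_length_le (Fin n) n).subset fun l hl => ?_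
    simpa using hl.2.2.1.length_le_card
  obtain ⟨l1, hl1, hm1⟩ := Set.exists_max_image _ List.length hfin ⟨_, h0⟩
  obtain ⟨l2, hl2, hm2⟩ := Set.exists_max_image {l | IsP G U l ∧ l.length = l1.length}
    (fun l => (l.head?.map d).getD 0) (hfin.subset fun l h => h.1) ⟨l1, hl1, rfl⟩
  refine ⟨l2, hl2.1, fun l' h => hl2.2 ▸ hm1 l' h, fun l' h he => ?_⟩
  have := hm2 l' ⟨h, he.trans hl2.2⟩
  rwa [List.head?_eq_some_head h.1, List.head?_eq_some_head hl2.1.1] at this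

theorem erdos_gallai {n : ℕ} (G : SimpleGraph (Fin n)) [DecidableRel G.Adj] (t : ℕ) (ht : 2 ≤ t)
    (hG : ∀ (v : Fin n) (c : G.Walk v v), c.IsCycle → c.length ≤ t) (U : Finset (Fin n))
    (hU : U.Nonempty) :
    (∑ u ∈ U, ∑ v ∈ U, if G.Adj u v then 1 else 0) + t ≤ t * #U := by
  induction U using Finset.strongInduction with
  | H U ih =>
  obtain ⟨l, hl, hmax, hdeg⟩ := exists_longest G U hU (fun v => #(U.filter (G.Adj v)))
  set a := l.head hl.1 with ha
  set d := #(U.filter (G.Adj a)) with hd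
  have hnd := hl.2.2.1
  have hpos : 0 < l.length := List.length_pos_iff.2 hl.1
  let f : ℕ → Fin n := fun i => l.getD i a
  have hf : ∀ i (hi : i < l.length), f i = l[i] := fun i hi => by simp [f, hi]
  have hfinj : ∀ i j, i < l.length → j < l.length → f i = f j → i = j := by
    intro i j hi hj h
    rw [hf i hi, hf j hj] at h
    exact (hnd.getElem_inj_iff).1 h
  have hfa : f 0 = a := by rw [hf 0 hpos, ha, List.head_eq_getElem]
  let J := (Finset.range (l.length - 1)).filter (fun i => G.Adj a (f (i+1)))
  have hJ : ∀ i, i ∈ J ↔ i + 1 < l.length ∧ G.Adj a (f (i+1)) := by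
    intro i; simp only [J, Finset.mem_filter, Finset.mem_range]
    constructor <;> rintro ⟨h1, h2⟩ <;> exact ⟨by omega, h2⟩
  let T := J.image f
  have hTU : T ⊆ U := by
    intro x hx
    obtain ⟨i, hi, rfl⟩ := Finset.mem_image.1 hx
    rw [hf i (by have := (hJ i).1 hi; omega)]
    exact hl.2.2.2 _ (List.getElem_mem _)
  have hNJ : U.filter (G.Adj a) = J.image (fun i => f (i+1)) := by
    ext y
    simp only [Finset.mem_filter, Finset.mem_image]
    constructor
    · rintro ⟨h1, h2⟩
      have := List.mem_of_mem_take (head_nbrs G t ht hG U l hl hmax y h1 h2)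
      obtain ⟨j, hj, rfl⟩ := List.getElem_of_mem this
      cases j with
      | zero => exfalso; rw [← hf 0 hj, hfa] at h2; exact G.loopless.irrefl _ h2
      | succ i => exact ⟨i, (hJ i).2 ⟨hj, by rw [hf _ hj]; exact h2⟩, hf _ hj⟩
    · rintro ⟨i, hi, rfl⟩
      obtain ⟨h1, h2⟩ := (hJ i).1 hi
      refine ⟨?_, h2⟩
      rw [hf _ h1]; exact hl.2.2.2 _ (List.getElem_mem _)
  have hcT : #T = d := by
    rw [hd, hNJ, Finset.card_image_of_injOn, Finset.card_image_of_injOn]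
    · intro i hi j hj h
      have h1 := ((hJ i).1 hi).1
      have h2 := ((hJ j).1 hj).1
      have := hfinj _ _ h1 h2 h
      omega
    · intro i hi j hj h
      have h1 := ((hJ i).1 hi).1
      have h2 := ((hJ j).1 hj).1
      exact hfinj _ _ (by omega) (by omega) h
  let W := (l.take t).toFinset
  have hW : #W ≤ t := (List.toFinset_card_le _).trans (by simp)
  have hJt : ∀ i ∈ J, i + 1 < t := by
    intro i hi
    obtain ⟨h1, h2⟩ := (hJ i).1 hi
    have hm := head_nbrs G t ht hG U l hl hmax (f (i+1))
      (by rw [hf _ h1]; exact hl.2.2.2 _ (List.getElem_mem _)) h2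
    rw [List.mem_take_iff_getElem] at hm
    obtain ⟨j, hj, hj2⟩ := hm
    rw [← hf] at hj2
    have := hfinj _ _ (by omega) h1 hj2
    omega
  have hTW : T ⊆ W := by
    intro x hx
    obtain ⟨i, hi, rfl⟩ := Finset.mem_image.1 hx
    have h1 := hJt i hi
    have h2 := ((hJ i).1 hi).1
    rw [hf i (by omega), List.mem_toFinset, List.mem_take_iff_getElem]
    exact ⟨i, by omega, rfl⟩
  have key : ∀ v ∈ T, #(U.filter (G.Adj v)) ≤ d ∧ U.filter (G.Adj v) ⊆ W := by
    intro x hx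
    obtain ⟨i, hi, rfl⟩ := Finset.mem_image.1 hx
    have h1 := hJt i hi
    obtain ⟨h2, h3⟩ := (hJ i).1 hi
    have hP := rot_isP G U l hl i h2 (by rw [← hf]; exact h3)
    set l' := (l.take (i+1)).reverse ++ l.drop (i+1) with hl'
    have hlen : l'.length = l.length := by simp [l']; omega
    have hhead : l'.head hP.1 = f i := by
      rw [hf i (by omega), List.head_eq_getElem]
      simp only [hl']
      rw [List.getElem_append_left (by simp; omega)]
      simp only [List.getElem_reverse, List.getElem_take, List.length_take]
      congr 1; omega
    constructor
    · have := hdeg l' hP hlen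
      rwa [hhead] at this
    · intro y hy
      obtain ⟨hy1, hy2⟩ := Finset.mem_filter.1 hy
      have := head_nbrs G t ht hG U l' hP (fun l2 h => hlen ▸ hmax l2 h) y hy1 (by rw [hhead]; exact hy2)
      rw [List.mem_toFinset]
      rw [hl', List.take_append, List.mem_append] at this
      rcases this with h | h
      · have h := List.mem_of_mem_take h
        rw [List.mem_reverse] at h
        exact (List.take_subset_take_left l (by omega)) h
      · rw [List.mem_take_iff_getElem] at h
        obtain ⟨j, hj, rfl⟩ := h
        simp at hj
        rw [List.mem_take_iff_getElem]
        refine ⟨i + 1 + j, by omega, by simp⟩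
  by_cases hd0 : d = 0
  · -- no edges at the head: path is a single vertex, and there are no edges at all
    have hl1 : l.length = 1 := by
      by_contra hne
      have h2 : 0 + 1 < l.length := by omega
      have : (0:ℕ) ∈ J := (hJ 0).2 ⟨h2, by
        rw [hf _ h2, ← hfa, hf 0 hpos]
        exact hl.2.1.getElem 0 h2⟩
      have h4 : f 0 ∈ T := Finset.mem_image_of_mem _ this
      have := Finset.card_pos.2 ⟨_, h4⟩
      omega
    have hz : (∑ u ∈ U, ∑ v ∈ U, if G.Adj u v then 1 else 0) = 0 := by
      refine Finset.sum_eq_zero fun u hu => Finset.sum_eq_zero fun v hv => ?_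
      rw [if_neg]
      intro h
      have := hmax [u, v] ⟨by simp, by simpa using h, by simpa using h.ne, by
        intro x hx; simp at hx; rcases hx with rfl | rfl <;> assumption⟩
      simp [hl1] at this
    rw [hz]
    have := Finset.card_pos.2 hU
    nlinarith
  · have hTne : T.Nonempty := by rw [← Finset.card_pos]; omega
    have hlast : f (l.length - 1) ∈ U \ T := by
      rw [Finset.mem_sdiff]
      constructor
      · rw [hf _ (by omega)]; exact hl.2.2.2 _ (List.getElem_mem _)
      · intro h
        obtain ⟨i, hi, h⟩ := Finset.mem_image.1 h
        have h2 := ((hJ i).1 hi).1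
        have := hfinj _ _ (by omega) (by omega) h
        omega
    have hih := ih (U \ T) (Finset.sdiff_ssubset hTU hTne) ⟨_, hlast⟩
    have hc : #(U \ T) + d = #U := by rw [← hcT]; exact Finset.card_sdiff_add_card_eq_card hTU
    have e1 : ∀ u, (∑ v ∈ U, if G.Adj u v then 1 else 0) =
        (∑ v ∈ U \ T, if G.Adj u v then 1 else 0) + ∑ v ∈ T, if G.Adj u v then 1 else 0 :=
      fun u => (Finset.sum_sdiff hTU).symm
    have e2 : (∑ u ∈ U, ∑ v ∈ U, if G.Adj u v then 1 else 0) =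
        (∑ u ∈ U \ T, ∑ v ∈ U \ T, if G.Adj u v then 1 else 0) +
        ∑ v ∈ T, (#(U.filter (G.Adj v)) + #((U \ T).filter (G.Adj v))) := by
      rw [← Finset.sum_sdiff hTU]
      rw [Finset.sum_congr rfl (fun u _ => e1 u), Finset.sum_add_distrib, Finset.sum_add_distrib,
        Finset.sum_comm (s := U \ T) (t := T)]
      simp only [Finset.card_filter, G.adj_comm]
      ring
    have e3 : ∑ v ∈ T, (#(U.filter (G.Adj v)) + #((U \ T).filter (G.Adj v))) ≤ d * t := by
      rw [← hcT]
      refine Finset.sum_le_card_nsmul _ _ _ fun v hv => ?_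
      obtain ⟨k1, k2⟩ := key v hv
      have : (U \ T).filter (G.Adj v) ⊆ W \ T := by
        intro y hy
        simp only [Finset.mem_filter, Finset.mem_sdiff] at hy ⊢
        exact ⟨k2 (Finset.mem_filter.2 ⟨hy.1.1, hy.2⟩), hy.1.2⟩
      have h1 := Finset.card_le_card this
      have h2 := Finset.card_sdiff_add_card_eq_card hTW
      omega
    rw [e2, ← hc]
    nlinarith

theorem weight_le {n : ℕ} (G : SimpleGraph (Fin n)) [DecidableRel G.Adj] (i : Fin n) (v : Fin n) :
    0 ≤ lapEigs G i := (SimpleGraph.posSemidef_lapMatrix ℝ G).eigenvalues_nonneg i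

/-- orthonormal eigenvectors of the Laplacian -/
theorem exists_eigs {n : ℕ} (G : SimpleGraph (Fin n)) [DecidableRel G.Adj] :
    ∃ y : Fin n → Fin n → ℝ,
      (∀ i v, (G.degree v : ℝ) * y i v - ∑ u ∈ G.neighborFinset v, y i u = lapEigs G i * y i v) ∧
      (∀ i, ∑ v, y i v ^ 2 = 1) ∧
      (∀ v, ∑ i, lapEigs G i * y i v ^ 2 = G.degree v) := by
  have hA := (SimpleGraph.posSemidef_lapMatrix ℝ G).isHermitian
  refine ⟨fun i v => hA.eigenvectorBasis i v, ?_, ?_, ?_⟩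
  · intro i v
    have := congrFun (hA.mulVec_eigenvectorBasis i) v
    rw [SimpleGraph.lapMatrix_mulVec_apply] at this
    simpa [lapEigs] using this
  · intro i
    have := hA.eigenvectorBasis.orthonormal.1 i
    rw [EuclideanSpace.norm_eq, Real.sqrt_eq_one] at this
    simpa using this
  · intro v
    have := congrFun (congrFun hA.spectral_theorem v) v
    have h2 : G.lapMatrix ℝ v v = G.degree v := by
      simp [SimpleGraph.lapMatrix, SimpleGraph.degMatrix]
    rw [h2] at this
    rw [this]
    simp only [Unitary.conjStarAlgAut_apply, Matrix.mul_apply, Matrix.diagonal_apply]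
    simp [Matrix.star_apply, Matrix.IsHermitian.eigenvectorUnitary_apply, lapEigs]
    refine Finset.sum_congr rfl fun i _ => by ring

theorem norm_lap {n : ℕ} (G : SimpleGraph (Fin n)) [DecidableRel G.Adj] (y : Fin n → ℝ) (lam : ℝ)
    (hl : 0 ≤ lam)
    (h : ∀ v, (G.degree v : ℝ) * y v - ∑ u ∈ G.neighborFinset v, y u = lam * y v)
    (h1 : ∑ v, y v ^ 2 = 1) : ∑ v, lam * y v ^ 2 / G.degree v ≤ 2 := by
  rcases hl.eq_or_lt with rfl | hpos
  · simp
  have hd : ∀ v, (lam * y v) ^ 2 / G.degree v ≤ ∑ u ∈ G.neighborFinset v, (y v - y u) ^ 2 := by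
    intro v
    have e : lam * y v = ∑ u ∈ G.neighborFinset v, (y v - y u) := by
      rw [← h v, Finset.sum_sub_distrib]; simp
    rw [e]
    have := sq_sum_le_card_mul_sum_sq (s := G.neighborFinset v) (f := fun u => y v - y u)
    rw [SimpleGraph.card_neighborFinset_eq_degree] at this
    refine div_le_of_le_mul₀ (by positivity) (Finset.sum_nonneg fun _ _ => sq_nonneg _) ?_
    linarith
  have hs : ∑ v, ∑ u ∈ G.neighborFinset v, (y v - y u) ^ 2 = 2 * lam := by
    have e1 : ∀ v, ∑ u ∈ G.neighborFinset v, (y v - y u) ^ 2 =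
        2 * (lam * y v ^ 2) - G.degree v * y v ^ 2 + ∑ u ∈ G.neighborFinset v, y u ^ 2 := by
      intro v
      have : ∑ u ∈ G.neighborFinset v, (y v - y u) ^ 2 =
        ∑ u ∈ G.neighborFinset v, (y v ^ 2 - 2 * y v * y u + y u ^ 2) :=
        Finset.sum_congr rfl fun u _ => by ring
      rw [this, Finset.sum_add_distrib, Finset.sum_sub_distrib, ← Finset.mul_sum]
      have := h v
      simp only [Finset.sum_const, SimpleGraph.card_neighborFinset_eq_degree, nsmul_eq_mul]
      linear_combination (2 * y v) * this
    have e2 : ∑ v, ∑ u ∈ G.neighborFinset v, y u ^ 2 = ∑ v, (G.degree v : ℝ) * y v ^ 2 := by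
      simp only [SimpleGraph.neighborFinset_eq_filter, Finset.sum_filter]
      rw [Finset.sum_comm]
      refine Finset.sum_congr rfl fun v _ => ?_
      rw [SimpleGraph.degree_eq_sum_if_adj, Finset.sum_mul]
      refine Finset.sum_congr rfl fun u _ => ?_
      simp [G.adj_comm u v]
    rw [Finset.sum_congr rfl fun v _ => e1 v, Finset.sum_add_distrib, Finset.sum_sub_distrib, e2,
      ← Finset.mul_sum, ← Finset.mul_sum, h1]
    ring
  have := (Finset.sum_le_sum fun v (_ : v ∈ Finset.univ) => hd v).trans_eq hs
  have e3 : ∑ v, (lam * y v) ^ 2 / G.degree v = lam * ∑ v, lam * y v ^ 2 / G.degree v := by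
    rw [Finset.mul_sum]; exact Finset.sum_congr rfl fun v _ => by ring
  rw [e3] at this
  nlinarith

theorem exists_top {n : ℕ} (d : Fin n → ℕ) (m : ℕ) (hm : m ≤ n) :
    ∃ U : Finset (Fin n), #U = m ∧ ∀ u ∈ U, ∀ v ∉ U, d v ≤ d u := by
  induction m with
  | zero => exact ⟨∅, by simp⟩
  | succ m ih =>
    obtain ⟨U, hU, h⟩ := ih (by omega)
    have : (Uᶜ).Nonempty := by
      rw [← Finset.card_pos, Finset.card_compl, Fintype.card_fin]; omega
    obtain ⟨w, hw, hmax⟩ := Finset.exists_max_image Uᶜ d this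
    rw [Finset.mem_compl] at hw
    refine ⟨insert w U, by rw [Finset.card_insert_of_notMem hw, hU], ?_⟩
    intro u hu v hv
    rw [Finset.mem_insert, not_or] at hv
    rcases Finset.mem_insert.1 hu with rfl | hu
    · exact hmax v (by simpa using hv.2)
    · exact h u hu v hv.2

theorem lp_bound {n : ℕ} (d : Fin n → ℕ) (m : ℕ) (x : Fin n → ℝ)
    (h0 : ∀ v, 0 ≤ x v) (h1 : ∀ v, x v ≤ 1) (hs : ∑ v, x v ≤ m) (hm : 1 ≤ m) (hn : 1 ≤ n) :
    ∃ U : Finset (Fin n), #U ≤ m ∧ U.Nonempty ∧ ∑ v, (d v : ℝ) * x v ≤ ∑ v ∈ U, (d v : ℝ) := by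
  rcases le_total n m with hnm | hmn
  · refine ⟨Finset.univ, by simpa using hnm, ⟨⟨0, hn⟩, by simp⟩, ?_⟩
    exact Finset.sum_le_sum fun v _ => mul_le_of_le_one_right (by positivity) (h1 v)
  · obtain ⟨U, hU, h⟩ := exists_top d m hmn
    have hne : U.Nonempty := by rw [← Finset.card_pos]; omega
    refine ⟨U, hU.le, hne, ?_⟩
    obtain ⟨w, hw, hmin⟩ := Finset.exists_min_image U d hne
    have a1 : ∀ v ∈ U, (d v : ℝ) * x v ≤ d v + d w * (x v - 1) := by
      intro v hv
      have : (d w : ℝ) ≤ d v := by exact_mod_cast hmin v hv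
      nlinarith [h1 v]
    have a2 : ∀ v ∈ Uᶜ, (d v : ℝ) * x v ≤ d w * x v := by
      intro v hv
      have : (d v : ℝ) ≤ d w := by exact_mod_cast h w hw v (by simpa using hv)
      nlinarith [h0 v]
    have b1 := Finset.sum_le_sum a1
    have b2 := Finset.sum_le_sum a2
    rw [Finset.sum_add_distrib, ← Finset.mul_sum, Finset.sum_sub_distrib] at b1
    simp only [Finset.sum_const, hU, nsmul_eq_mul, mul_one] at b1
    rw [← Finset.mul_sum] at b2
    rw [← Finset.sum_add_sum_compl U] at hs ⊢
    have : (0:ℝ) ≤ d w := by positivity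
    nlinarith

theorem deg_sum_le {n : ℕ} (G : SimpleGraph (Fin n)) [DecidableRel G.Adj] (U : Finset (Fin n)) :
    2 * ∑ v ∈ U, G.degree v ≤
      2 * #G.edgeFinset + ∑ u ∈ U, ∑ v ∈ U, if G.Adj u v then 1 else 0 := by
  rw [← G.sum_degrees_eq_twice_card_edges]
  have hd : ∀ v, G.degree v = (∑ u ∈ U, if G.Adj v u then 1 else 0) +
      ∑ u ∈ Uᶜ, if G.Adj v u then 1 else 0 := by
    intro v
    have := SimpleGraph.degree_eq_sum_if_adj (R := ℕ) G v
    rw [Finset.sum_add_sum_compl]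
    exact_mod_cast this
  rw [← Finset.sum_add_sum_compl U]
  have hc : (∑ v ∈ Uᶜ, ∑ u ∈ U, if G.Adj v u then 1 else 0) =
      ∑ v ∈ U, ∑ u ∈ Uᶜ, if G.Adj v u then 1 else 0 := by
    rw [Finset.sum_comm]; simp only [G.adj_comm]
  simp only [hd, Finset.sum_add_distrib]
  rw [hc]
  omega

theorem sum_ith {n : ℕ} (f : Fin n → ℝ) (k : ℕ) (hk : k ≤ n) :
    ∃ I : Finset (Fin n), #I = k ∧ ∑ i ∈ Finset.Icc 1 k, ithLargest f i = ∑ i ∈ I, f i := by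
  let e : Fin k → Fin n := fun j => Tuple.sort f (Fin.rev (Fin.castLE hk j))
  have he : Function.Injective e := fun a b h => by
    have := (Tuple.sort f).injective h
    have := Fin.rev_injective this
    exact Fin.castLE_injective hk this
  refine ⟨Finset.univ.image e, by rw [Finset.card_image_of_injective _ he]; simp, ?_⟩
  rw [Finset.sum_image he.injOn]
  have : Finset.Icc 1 k = (Finset.range k).image (· + 1) := by
    ext x; simp only [Finset.mem_Icc, Finset.mem_image, Finset.mem_range]
    constructor
    · rintro ⟨h1, h2⟩; exact ⟨x - 1, by omega, by omega⟩
    · rintro ⟨a, h, rfl⟩; omega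
  rw [this, Finset.sum_image (fun a _ b _ h => by simpa using h), Finset.sum_range]
  refine Finset.sum_congr rfl fun j _ => ?_
  have hj := j.2
  rw [ithLargest, dif_pos ⟨by omega, by omega⟩]
  rfl

/-- for `k ≥ 1`, `t ≥ 2`, and a graph `G` with at least `k` vertices
containing no cycle of length greater than `t`,
`∑_{i=1}^k λ_i(L(G)) ≤ |E| + ⌊t(2k − 1)/2⌋`. -/
theorem sum_lapEigs_le_of_no_long_cycle {n : ℕ} (G : SimpleGraph (Fin n)) [DecidableRel G.Adj]
    (t : ℕ) (ht : 2 ≤ t)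
    (hG : ∀ (v : Fin n) (c : G.Walk v v), c.IsCycle → c.length ≤ t)
    (k : ℕ) (hk1 : 1 ≤ k) (hk2 : k ≤ n) :
    ∑ i ∈ Finset.Icc 1 k, ithLargest (lapEigs G) i ≤
      (G.edgeFinset.card : ℝ) + (⌊(t : ℝ) * (2 * (k : ℝ) - 1) / 2⌋ : ℝ) := by
  obtain ⟨I, hI, hsum⟩ := sum_ith (lapEigs G) k hk2
  rw [hsum]
  obtain ⟨y, hy1, hy2, hy3⟩ := exists_eigs G
  have hnn : ∀ i, 0 ≤ lapEigs G i := fun i => (SimpleGraph.posSemidef_lapMatrix ℝ G).eigenvalues_nonneg i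
  let a : Fin n → ℝ := fun v => ∑ i ∈ I, lapEigs G i * y i v ^ 2
  have ha0 : ∀ v, 0 ≤ a v := fun v =>
    Finset.sum_nonneg fun i _ => mul_nonneg (hnn i) (sq_nonneg _)
  have had : ∀ v, a v ≤ G.degree v := fun v => by
    rw [← hy3 v]
    exact Finset.sum_le_sum_of_subset_of_nonneg (Finset.subset_univ _)
      fun i _ _ => mul_nonneg (hnn i) (sq_nonneg _)
  have hax : ∀ v, a v = G.degree v * (a v / G.degree v) := fun v => by
    by_cases h : (G.degree v : ℝ) = 0
    · have h1 := had v
      have h2 := ha0 v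
      rw [h] at h1 ⊢
      simp; linarith
    · field_simp
  have hs : ∑ v, a v / G.degree v ≤ (2 * k : ℕ) := by
    have : ∑ v, a v / G.degree v = ∑ i ∈ I, ∑ v, lapEigs G i * y i v ^ 2 / G.degree v := by
      rw [Finset.sum_comm]
      exact Finset.sum_congr rfl fun v _ => Finset.sum_div _ _ _
    rw [this]
    have := Finset.sum_le_card_nsmul I _ 2
      fun i _ => norm_lap G (y i) (lapEigs G i) (hnn i) (hy1 i) (hy2 i)
    rw [hI] at this
    simp at this ⊢
    linarith
  have htot : ∑ i ∈ I, lapEigs G i = ∑ v, a v := by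
    rw [Finset.sum_comm]
    refine Finset.sum_congr rfl fun i _ => ?_
    rw [← Finset.mul_sum, hy2, mul_one]
  obtain ⟨U, hU, hne, hle⟩ := lp_bound (fun v => G.degree v) (2 * k) (fun v => a v / G.degree v)
    (fun v => div_nonneg (ha0 v) (by positivity))
    (fun v => div_le_one_of_le₀ (had v) (by positivity)) hs (by omega) (by omega)
  have hEG := erdos_gallai G t ht hG U hne
  have hdeg := deg_sum_le G U
  rw [htot, Finset.sum_congr rfl fun v _ => hax v]
  refine hle.trans ?_
  have hint : 2 * ∑ v ∈ U, G.degree v + t ≤ 2 * #G.edgeFinset + t * (2 * k) := by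
    have := Nat.mul_le_mul_left t hU
    omega
  have hfl : ((∑ v ∈ U, G.degree v : ℕ) : ℤ) - (#G.edgeFinset : ℤ) ≤
      ⌊(t : ℝ) * (2 * (k : ℝ) - 1) / 2⌋ := by
    rw [Int.le_floor]
    have : ((2 * ∑ v ∈ U, G.degree v + t : ℕ) : ℝ) ≤ ((2 * #G.edgeFinset + t * (2 * k) : ℕ) : ℝ) := by
      exact_mod_cast hint
    push_cast at this ⊢
    linarith
  have : (((∑ v ∈ U, G.degree v : ℕ) : ℤ) : ℝ) - ((#G.edgeFinset : ℤ) : ℝ) ≤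
      (⌊(t : ℝ) * (2 * (k : ℝ) - 1) / 2⌋ : ℝ) := by exact_mod_cast hfl
  push_cast at this ⊢
  linarith
end

section
/- Let k ≥ 1 and let G = (V,E) be a finite simple triangle-free graph with |V| ≥ k. Then ∑_{i=1}^{k} λ_i(Q(G)) ≤ |E| + k². -/
open Finset

/-- The signless Laplacian matrix `Q(G) = D + A` of a finite simple graph. -/
noncomputable def signlessLap {n : ℕ} (G : SimpleGraph (Fin n)) [DecidableRel G.Adj] :
    Matrix (Fin n) (Fin n) ℝ :=
  G.degMatrix ℝ + G.adjMatrix ℝ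

theorem isHermitian_signlessLap {n : ℕ} (G : SimpleGraph (Fin n)) [DecidableRel G.Adj] :
    (signlessLap G).IsHermitian := by
  rw [Matrix.IsHermitian, Matrix.conjTranspose_eq_transpose_of_trivial]
  exact (SimpleGraph.isSymm_degMatrix ℝ G).add (SimpleGraph.isSymm_adjMatrix G)

/-- The eigenvalues of the signless Laplacian matrix of `G`
(as a tuple indexed by the vertices, with multiplicity). -/
noncomputable def signlessLapEigs {n : ℕ} (G : SimpleGraph (Fin n)) [DecidableRel G.Adj] :
    Fin n → ℝ :=
  (isHermitian_signlessLap G).eigenvalues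

/-- Pick out the index set of the `k` largest entries. -/
theorem exists_topSet {n : ℕ} (f : Fin n → ℝ) (k : ℕ) (hk : k ≤ n) :
    ∃ I : Finset (Fin n), I.card = k ∧ ∑ i ∈ Finset.Icc 1 k, ithLargest f i = ∑ i ∈ I, f i := by
  classical
  let g : Fin k → Fin n := fun j => Tuple.sort f (Fin.rev ⟨j.1, by omega⟩)
  have hg : Function.Injective g := by
    intro a b hab
    have h1 := (Tuple.sort f).injective hab
    have h2 := Fin.rev_injective h1
    simp only [Fin.mk.injEq] at h2
    exact Fin.ext h2
  refine ⟨Finset.univ.map ⟨g, hg⟩, by simp, ?_⟩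
  rw [Finset.sum_map]
  symm
  refine Finset.sum_bij (fun j _ => j.1 + 1) ?_ ?_ ?_ ?_
  · intro j _
    simp only [Finset.mem_Icc]
    have := j.2
    omega
  · intro a _ b _ h
    apply Fin.ext
    simpa using h
  · intro b hb
    simp only [Finset.mem_Icc] at hb
    exact ⟨⟨b - 1, by omega⟩, Finset.mem_univ _, by simp; omega⟩
  · intro j _
    have hj := j.2
    unfold ithLargest
    rw [dif_pos ⟨by omega, by omega⟩]
    rfl

/-- The weighted Mantel (Motzkin-Straus) inequality. -/
theorem mantel_weighted {n : ℕ} (A : Fin n → Fin n → ℝ) (h01 : ∀ u v, A u v = 0 ∨ A u v = 1)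
    (hs : ∀ u v, A u v = A v u) (ht : ∀ u v w, A u v = 1 → A u w + A v w ≤ 1)
    (a : Fin n → ℝ) (ha : ∀ u, 0 ≤ a u) :
    ∑ u, ∑ v, A u v * (a u * a v) ≤ (∑ u, a u) ^ 2 / 2 := by
  set K := ∑ u, a u with hK
  let s : Fin n → ℝ := fun u => ∑ v, A u v * a v
  set M := ∑ u, ∑ v, A u v * (a u * a v) with hM
  have hA0 : ∀ u v, 0 ≤ A u v := fun u v => by rcases h01 u v with h | h <;> simp [h]
  have hM0 : 0 ≤ M := Finset.sum_nonneg fun u _ => Finset.sum_nonneg fun v _ =>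
    mul_nonneg (hA0 u v) (mul_nonneg (ha u) (ha v))
  have hMs : M = ∑ u, a u * s u := by
    rw [hM]
    refine Finset.sum_congr rfl fun u _ => ?_
    simp only [s, Finset.mul_sum]
    exact Finset.sum_congr rfl fun v _ => by ring
  have hedge : ∀ u v, A u v * (a u * a v) * (s u + s v) ≤ A u v * (a u * a v) * K := by
    intro u v
    rcases h01 u v with h | h
    · simp [h]
    · apply mul_le_mul_of_nonneg_left _ (mul_nonneg (hA0 u v) (mul_nonneg (ha u) (ha v)))
      simp only [s, hK]
      rw [← Finset.sum_add_distrib]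
      refine Finset.sum_le_sum fun w _ => ?_
      have := mul_le_mul_of_nonneg_right (ht u v w h) (ha w)
      linarith
  have h1 : ∑ u, ∑ v, A u v * (a u * a v) * s u = ∑ u, a u * s u ^ 2 := by
    refine Finset.sum_congr rfl fun u _ => ?_
    rw [← Finset.sum_mul]
    have : ∑ v, A u v * (a u * a v) = a u * s u := by
      simp only [s, Finset.mul_sum]
      exact Finset.sum_congr rfl fun v _ => by ring
    rw [this]; ring
  have h2 : ∑ u, ∑ v, A u v * (a u * a v) * s v = ∑ u, a u * s u ^ 2 := by
    rw [← h1, Finset.sum_comm]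
    refine Finset.sum_congr rfl fun u _ => Finset.sum_congr rfl fun v _ => ?_
    rw [hs v u]; ring
  have h3 : 2 * ∑ u, a u * s u ^ 2 ≤ M * K := by
    have : ∑ u, ∑ v, A u v * (a u * a v) * (s u + s v) ≤ ∑ u, ∑ v, A u v * (a u * a v) * K :=
      Finset.sum_le_sum fun u _ => Finset.sum_le_sum fun v _ => hedge u v
    simp only [mul_add, Finset.sum_add_distrib, ← Finset.sum_mul] at this
    simp only [← Finset.sum_mul] at h1 h2
    rw [h1, h2] at this
    linarith
  have h4 : M ^ 2 ≤ K * ∑ u, a u * s u ^ 2 := by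
    rw [hMs]
    apply Finset.sum_sq_le_sum_mul_sum_of_sq_le_mul
    · exact fun i _ => ha i
    · exact fun i _ => mul_nonneg (ha i) (sq_nonneg _)
    · intro i _; apply le_of_eq; ring
  have hK0 : 0 ≤ K := Finset.sum_nonneg fun u _ => ha u
  have h5 : M ^ 2 ≤ M * (K ^ 2 / 2) := by nlinarith
  rcases hM0.eq_or_lt with h | h
  · rw [← h]; positivity
  · nlinarith

/-- The per-edge inequality. -/
theorem edge_ineq (a b p μ : ℝ) (ha0 : 0 ≤ a) (hb0 : 0 ≤ b) (ha : a ≤ 1) (hb : b ≤ 1)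
    (hμ : 4 / 3 ≤ μ) (hpa : p ^ 2 ≤ a * (1 - a)) (hpb : p ^ 2 ≤ b * (1 - b)) :
    a + b - 1 + 2 * p ≤ μ * (p ^ 2 / (1 - a) + p ^ 2 / (1 - b)) + 4 / 3 * (a * b) := by
  rcases ha.eq_or_lt with rfl | ha'
  · have : p = 0 := by nlinarith
    subst this; simp; linarith
  rcases hb.eq_or_lt with rfl | hb'
  · have : p = 0 := by nlinarith
    subst this; simp; linarith
  obtain ⟨x, rfl⟩ : ∃ x, a = 1 - x := ⟨1 - a, by ring⟩
  obtain ⟨y, rfl⟩ : ∃ y, b = 1 - y := ⟨1 - b, by ring⟩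
  have hx : 0 < x := by linarith
  have hy : 0 < y := by linarith
  simp only [sub_sub_cancel]
  have h1 : 4 / 3 * (p ^ 2 / x + p ^ 2 / y) ≤ μ * (p ^ 2 / x + p ^ 2 / y) :=
    mul_le_mul_of_nonneg_right hμ (by positivity)
  have h2 : 2 * p ≤ 4 / 3 * (p ^ 2 / x + p ^ 2 / y) + 3 / 4 * (x * y / (x + y)) := by
    have : 4 / 3 * (p ^ 2 / x + p ^ 2 / y) + 3 / 4 * (x * y / (x + y)) - 2 * p
        = (4 * p * (x + y) - 3 * (x * y)) ^ 2 / (12 * (x * y) * (x + y)) := by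
      field_simp; ring
    have h0 : 0 ≤ (4 * p * (x + y) - 3 * (x * y)) ^ 2 / (12 * (x * y) * (x + y)) := by positivity
    linarith
  have h3 : 1 - x - y + 3 / 4 * (x * y / (x + y)) ≤ 4 / 3 * ((1 - x) * (1 - y)) := by
    have hz : 0 < x + y := by positivity
    have key : 0 ≤ (x + y) * (1 - (x + y)) / 3 + (x * y) * (4 / 3 * (x + y) - 3 / 4) := by
      have hp4 : x * y ≤ (x + y) ^ 2 / 4 := by nlinarith [sq_nonneg (x - y)]
      have hp1 : x + y - 1 ≤ x * y := by nlinarith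
      have hp0 : 0 ≤ x * y := by positivity
      generalize x * y = q at *
      generalize x + y = z at *
      by_cases hc : 9 / 16 ≤ z
      · by_cases hz1 : z ≤ 1
        · have := mul_nonneg hp0 (show 0 ≤ 4 / 3 * z - 3 / 4 by linarith)
          nlinarith
        · have := mul_le_mul_of_nonneg_right hp1 (show 0 ≤ 4 / 3 * z - 3 / 4 by linarith)
          nlinarith
      · have := mul_le_mul_of_nonneg_right hp4 (show 0 ≤ 3 / 4 - 4 / 3 * z by linarith)
        have h6 : 0 ≤ (1 - z) / 3 - z / 4 * (3 / 4 - 4 / 3 * z) := by nlinarith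
        have := mul_nonneg hz.le h6
        nlinarith
    have e : 4 / 3 * ((1 - x) * (1 - y)) - (1 - x - y + 3 / 4 * (x * y / (x + y)))
        = ((x + y) * (1 - (x + y)) / 3 + (x * y) * (4 / 3 * (x + y) - 3 / 4)) / (x + y) := by
      field_simp; ring
    have := div_nonneg key hz.le
    linarith
  linarith

/-- The main estimate for a projection matrix. -/
theorem proj_estimate {n : ℕ} (A P : Fin n → Fin n → ℝ) (h01 : ∀ u v, A u v = 0 ∨ A u v = 1)
    (hs : ∀ u v, A u v = A v u) (hd : ∀ u, A u u = 0)
    (ht : ∀ u v w, A u v = 1 → A u w + A v w ≤ 1)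
    (hP : ∀ u v, P u v = P v u) (hPP : ∀ u, ∑ v, P u v ^ 2 = P u u) (k : ℝ) (hk : 2 ≤ k)
    (htr : ∑ u, P u u = k) :
    ∑ u, ∑ v, A u v * (P u u + P v v - 1 + 2 * P u v) ≤ 2 * k ^ 2 := by
  have hA0 : ∀ u v, 0 ≤ A u v := fun u v => by rcases h01 u v with h | h <;> simp [h]
  have ha0 : ∀ u, 0 ≤ P u u := fun u => by
    rw [← hPP]; exact Finset.sum_nonneg fun v _ => sq_nonneg _
  have hsq : ∀ u v, u ≠ v → P u u ^ 2 + P u v ^ 2 ≤ P u u := by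
    intro u v huv
    conv_rhs => rw [← hPP]
    rw [← Finset.sum_pair (f := fun w => P u w ^ 2) huv]
    exact Finset.sum_le_sum_of_subset_of_nonneg (Finset.subset_univ _) fun _ _ _ => sq_nonneg _
  have hsq' : ∀ u, P u u ^ 2 ≤ P u u := by
    intro u
    conv_rhs => rw [← hPP]
    exact Finset.single_le_sum (f := fun w => P u w ^ 2) (fun _ _ => sq_nonneg _)
      (Finset.mem_univ u)
  have ha1 : ∀ u, P u u ≤ 1 := fun u => by nlinarith [hsq' u]
  set μ : ℝ := 2 * k / 3 with hμ
  have hedge : ∀ u v, A u v * (P u u + P v v - 1 + 2 * P u v) ≤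
      μ * (A u v * (P u v ^ 2 / (1 - P u u))) + μ * (A v u * (P v u ^ 2 / (1 - P v v)))
        + 4 / 3 * (A u v * (P u u * P v v)) := by
    intro u v
    by_cases huv : u = v
    · subst huv; simp [hd]
    · have h1 := hsq u v huv
      have h2 := hsq v u (Ne.symm huv)
      rw [hP v u] at h2 ⊢
      rw [hs v u]
      have := edge_ineq (P u u) (P v v) (P u v) μ (ha0 u) (ha0 v) (ha1 u) (ha1 v)
        (by rw [hμ]; linarith) (by nlinarith) (by nlinarith)
      have := mul_le_mul_of_nonneg_left this (hA0 u v)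
      linarith
  have hrow : ∀ u, ∑ v, A u v * (P u v ^ 2 / (1 - P u u)) ≤ P u u := by
    intro u
    have h1 : ∑ v, A u v * (P u v ^ 2 / (1 - P u u)) = (∑ v, A u v * P u v ^ 2) / (1 - P u u) := by
      rw [Finset.sum_div]; exact Finset.sum_congr rfl fun v _ => by ring
    have h2 : ∑ v, A u v * P u v ^ 2 ≤ P u u * (1 - P u u) := by
      have : ∑ v, A u v * P u v ^ 2 ≤ ∑ v, (P u v ^ 2 - if v = u then P u u ^ 2 else 0) := by
        refine Finset.sum_le_sum fun v _ => ?_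
        by_cases h : v = u
        · subst h; simp [hd]
        · simp only [h, if_false, sub_zero]
          rcases h01 u v with h | h <;> simp [h, sq_nonneg]
      rw [Finset.sum_sub_distrib, hPP] at this
      simp at this
      linarith
    rw [h1]
    rcases (ha1 u).eq_or_lt with h | h
    · rw [h]; simp
    · rw [div_le_iff₀ (by linarith)]; exact h2
  have hB : ∑ u, ∑ v, A u v * (P u v ^ 2 / (1 - P u u)) ≤ k := by
    rw [← htr]; exact Finset.sum_le_sum fun u _ => hrow u
  have hM := mantel_weighted A h01 hs ht (fun u => P u u) ha0
  rw [htr] at hM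
  have hsum := Finset.sum_le_sum fun u (_ : u ∈ (Finset.univ : Finset (Fin n))) =>
    Finset.sum_le_sum fun v (_ : v ∈ (Finset.univ : Finset (Fin n))) => hedge u v
  simp only [Finset.sum_add_distrib, ← Finset.mul_sum] at hsum
  rw [Finset.sum_comm (f := fun u v => A v u * (P v u ^ 2 / (1 - P v v)))] at hsum
  have hμ0 : 0 ≤ μ := by rw [hμ]; linarith
  have := mul_le_mul_of_nonneg_left hB hμ0
  have e : μ * k = 2 * k ^ 2 / 3 := by rw [hμ]; ring
  have goal' : ∑ u, ∑ v, A u v * (P u u + P v v - 1 + 2 * P u v) ≤ 2 * k ^ 2 := by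
    refine hsum.trans ?_
    linarith
  exact goal'

/-- The case of one eigenvalue. -/
theorem one_estimate {n : ℕ} (A : Fin n → Fin n → ℝ) (h01 : ∀ u v, A u v = 0 ∨ A u v = 1)
    (hs : ∀ u v, A u v = A v u) (m : ℝ) (hm : 0 ≤ m)
    (hdeg : ∀ u v, A u v = 1 → ∑ w, A u w + ∑ w, A v w ≤ m)
    (x : Fin n → ℝ) (hx : ∑ u, x u ^ 2 = 1) (l : ℝ)
    (hl : ∀ u, ∑ v, A u v * (x u + x v) = l * x u) : l ≤ m := by
  have hA0 : ∀ u v, 0 ≤ A u v := fun u v => by rcases h01 u v with h | h <;> simp [h]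
  have hAA : ∀ u v, A u v ^ 2 = A u v := fun u v => by rcases h01 u v with h | h <;> simp [h]
  have hq : ∑ u, ∑ v, A u v * (x u + x v) * x u = l := by
    simp only [← Finset.sum_mul, hl]
    have : ∑ u, l * x u * x u = l * ∑ u, x u ^ 2 := by
      rw [Finset.mul_sum]
      exact Finset.sum_congr rfl fun u _ => by ring
    rw [this, hx, mul_one]
  have hq' : ∑ u, ∑ v, A u v * (x u + x v) * x v = l := by
    rw [← hq, Finset.sum_comm]
    refine Finset.sum_congr rfl fun u _ => Finset.sum_congr rfl fun v _ => ?_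
    rw [hs v u]; ring
  have hS : ∑ u, ∑ v, A u v * (x u + x v) ^ 2 = 2 * l := by
    rw [two_mul]
    nth_rewrite 1 [← hq]
    rw [← hq']
    simp only [← Finset.sum_add_distrib]
    exact Finset.sum_congr rfl fun u _ => Finset.sum_congr rfl fun v _ => by ring
  have hcs : ∀ u, l ^ 2 * x u ^ 2 ≤ (∑ w, A u w) * ∑ v, A u v * (x u + x v) ^ 2 := by
    intro u
    rw [← mul_pow, ← hl]
    apply Finset.sum_sq_le_sum_mul_sum_of_sq_le_mul
    · exact fun i _ => hA0 u i
    · exact fun i _ => mul_nonneg (hA0 u i) (sq_nonneg _)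
    · intro i _; apply le_of_eq; ring
  have h1 : l ^ 2 ≤ ∑ u, ∑ v, (∑ w, A u w) * (A u v * (x u + x v) ^ 2) := by
    have := Finset.sum_le_sum fun u (_ : u ∈ (Finset.univ : Finset (Fin n))) => hcs u
    rw [← Finset.mul_sum, hx, mul_one] at this
    simpa only [Finset.mul_sum] using this
  have h2 : l ^ 2 ≤ ∑ u, ∑ v, (∑ w, A v w) * (A u v * (x u + x v) ^ 2) := by
    refine h1.trans_eq ?_
    rw [Finset.sum_comm]
    refine Finset.sum_congr rfl fun u _ => Finset.sum_congr rfl fun v _ => ?_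
    rw [hs v u, add_comm (x v)]
  have h3 : 2 * l ^ 2 ≤ m * (2 * l) := by
    rw [← hS, two_mul, Finset.mul_sum]
    refine (add_le_add h1 h2).trans ?_
    simp only [← Finset.sum_add_distrib]
    refine Finset.sum_le_sum fun u _ => ?_
    rw [Finset.mul_sum]
    refine Finset.sum_le_sum fun v _ => ?_
    rcases h01 u v with h | h
    · simp [h]
    · rw [← add_mul]
      exact mul_le_mul_of_nonneg_right (hdeg u v h) (mul_nonneg (hA0 u v) (sq_nonneg _))
  by_contra hlt
  push Not at hlt
  nlinarith

/-- for `k ≥ 1` and a triangle-free graph `G` with at least `k` vertices,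
`∑_{i=1}^k λ_i(Q(G)) ≤ |E| + k²`. -/
theorem sum_signlessLapEigs_le_of_triangleFree {n : ℕ} (G : SimpleGraph (Fin n))
    [DecidableRel G.Adj] (hG : G.CliqueFree 3) (k : ℕ) (hk1 : 1 ≤ k) (hk2 : k ≤ n) :
    ∑ i ∈ Finset.Icc 1 k, ithLargest (signlessLapEigs G) i ≤
      (G.edgeFinset.card : ℝ) + (k : ℝ) ^ 2 := by
  classical
  obtain ⟨I, hI, hsum⟩ := exists_topSet (signlessLapEigs G) k hk2
  rw [hsum]
  let A : Fin n → Fin n → ℝ := fun u v => if G.Adj u v then 1 else 0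
  have h01 : ∀ u v, A u v = 0 ∨ A u v = 1 := fun u v => by
    by_cases h : G.Adj u v <;> simp [A, h]
  have hs : ∀ u v, A u v = A v u := fun u v => by simp [A, G.adj_comm]
  have hd : ∀ u, A u u = 0 := fun u => by simp [A]
  have ht : ∀ u v w, A u v = 1 → A u w + A v w ≤ 1 := by
    intro u v w h
    have huv : G.Adj u v := by
      by_contra h'; simp [A, h'] at h
    by_cases h1 : G.Adj u w
    · by_cases h2 : G.Adj v w
      · exact absurd (SimpleGraph.is3Clique_triple_iff.2 ⟨huv, h1, h2⟩) (hG _)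
      · simp [A, h1, h2]
    · by_cases h2 : G.Adj v w <;> simp [A, h1, h2]
  have hdegA : ∀ u, ∑ v, A u v = G.degree u := by
    intro u
    simp [A, ← SimpleGraph.card_neighborFinset_eq_degree, SimpleGraph.neighborFinset_eq_filter]
  have hE : ∑ u, ∑ v, A u v = 2 * (G.edgeFinset.card : ℝ) := by
    simp only [hdegA]
    exact_mod_cast G.sum_degrees_eq_twice_card_edges
  let hH := isHermitian_signlessLap G
  let x : Fin n → Fin n → ℝ := fun i u => hH.eigenvectorBasis i u
  have horth : ∀ i j, ∑ u, x i u * x j u = if i = j then 1 else 0 := by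
    intro i j
    have := hH.eigenvectorBasis.inner_eq_ite i j
    simp only [PiLp.inner_apply] at this
    simp only [x]
    rw [← this]
    exact Finset.sum_congr rfl fun u _ => by simp [mul_comm]
  have heig : ∀ i u, ∑ v, A u v * (x i u + x i v) = signlessLapEigs G i * x i u := by
    intro i u
    have := congrFun (hH.mulVec_eigenvectorBasis i) u
    simp only [signlessLap, Matrix.add_mulVec, Pi.add_apply, SimpleGraph.degMatrix,
      Matrix.mulVec_diagonal, SimpleGraph.adjMatrix_mulVec_apply] at this
    have h2 : ∑ v, A u v * (x i u + x i v) = G.degree u * x i u + ∑ v ∈ G.neighborFinset u, x i v := by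
      simp only [mul_add, Finset.sum_add_distrib, ← Finset.sum_mul, hdegA]
      congr 1
      simp [A, SimpleGraph.neighborFinset_eq_filter, Finset.sum_filter]
    rw [h2]
    exact this
  by_cases hk : k = 1
  · subst hk
    obtain ⟨i, rfl⟩ := Finset.card_eq_one.1 hI
    rw [Finset.sum_singleton]
    refine one_estimate A h01 hs _ (by positivity) ?_ (x i) ?_ _ (heig i)
    · intro u v h
      have huv : G.Adj u v := by
        by_contra h'; simp [A, h'] at h
      rw [hdegA, hdegA]
      have h1 : (G.incidenceFinset u ∪ G.incidenceFinset v).card ≤ G.edgeFinset.card :=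
        Finset.card_le_card (Finset.union_subset (G.incidenceFinset_subset u)
          (G.incidenceFinset_subset v))
      have h2 : (G.incidenceFinset u ∩ G.incidenceFinset v).card ≤ 1 := by
        rw [Finset.card_le_one]
        intro e he f hf
        simp only [Finset.mem_inter, SimpleGraph.mem_incidenceFinset, SimpleGraph.incidenceSet,
          Set.mem_ofPred_eq] at he hf
        rw [(Sym2.mem_and_mem_iff huv.ne).1 ⟨he.1.2, he.2.2⟩,
          (Sym2.mem_and_mem_iff huv.ne).1 ⟨hf.1.2, hf.2.2⟩]
      have h3 := Finset.card_union_add_card_inter (G.incidenceFinset u) (G.incidenceFinset v)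
      rw [G.card_incidenceFinset_eq_degree, G.card_incidenceFinset_eq_degree] at h3
      have : G.degree u + G.degree v ≤ G.edgeFinset.card + 1 := by omega
      have : (G.degree u : ℝ) + G.degree v ≤ G.edgeFinset.card + 1 := by exact_mod_cast this
      simpa using this
    · have := horth i i
      simp only [if_true] at this
      rw [← this]
      exact Finset.sum_congr rfl fun u _ => by ring
  · have hk' : (2 : ℝ) ≤ k := by
      have : 2 ≤ k := by omega
      exact_mod_cast this
    let P : Fin n → Fin n → ℝ := fun u v => ∑ i ∈ I, x i u * x i v
    have hP : ∀ u v, P u v = P v u := fun u v => Finset.sum_congr rfl fun i _ => by ring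
    have hPP : ∀ u, ∑ v, P u v ^ 2 = P u u := by
      intro u
      have : ∀ v, P u v ^ 2 = ∑ i ∈ I, ∑ j ∈ I, (x i u * x j u) * (x i v * x j v) := by
        intro v
        simp only [P, sq, Finset.sum_mul_sum]
        exact Finset.sum_congr rfl fun i _ => Finset.sum_congr rfl fun j _ => by ring
      simp only [this]
      rw [Finset.sum_comm]
      refine Finset.sum_congr rfl fun i hi => ?_
      rw [Finset.sum_comm]
      simp only [← Finset.mul_sum, horth]
      simp [hi]
    have htr : ∑ u, P u u = k := by
      simp only [P]
      rw [Finset.sum_comm]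
      simp [horth, hI]
    have hmain := proj_estimate A P h01 hs hd ht hP hPP k hk' htr
    have h1 : ∑ u, ∑ v, A u v * (P u u + P u v) = ∑ i ∈ I, signlessLapEigs G i := by
      have e1 : ∀ u, ∑ v, A u v * (P u u + P u v)
          = ∑ i ∈ I, signlessLapEigs G i * (x i u * x i u) := by
        intro u
        have : ∀ v, A u v * (P u u + P u v) = ∑ i ∈ I, (A u v * (x i u + x i v)) * x i u := by
          intro v
          simp only [P, ← Finset.sum_add_distrib, Finset.mul_sum]
          exact Finset.sum_congr rfl fun i _ => by ring
        simp only [this]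
        rw [Finset.sum_comm]
        refine Finset.sum_congr rfl fun i _ => ?_
        rw [← Finset.sum_mul, heig]; ring
      simp only [e1]
      rw [Finset.sum_comm]
      refine Finset.sum_congr rfl fun i _ => ?_
      rw [← Finset.mul_sum, horth]; simp
    have h2 : ∑ u, ∑ v, A u v * (P v v + P u v) = ∑ i ∈ I, signlessLapEigs G i := by
      rw [← h1, Finset.sum_comm]
      refine Finset.sum_congr rfl fun u _ => Finset.sum_congr rfl fun v _ => ?_
      rw [hs v u, hP v u]
    have h3 : ∑ u, ∑ v, A u v * (P u u + P v v - 1 + 2 * P u v) =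
        ∑ u, ∑ v, A u v * (P u u + P u v) + ∑ u, ∑ v, A u v * (P v v + P u v)
          - ∑ u, ∑ v, A u v := by
      simp only [← Finset.sum_add_distrib, ← Finset.sum_sub_distrib]
      exact Finset.sum_congr rfl fun u _ => Finset.sum_congr rfl fun v _ => by ring
    rw [h3, h1, h2, hE] at hmain
    linarith
end
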